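/- For all m×m positive definite complex matrices A and B, the geometric mean A # B is the unique metric midpoint of A and B with respect to the Riemannian metric δ: δ(A, A#B) = δ(A#B, B) = (1/2)δ(A,B), and any positive definite M with δ(A,M) = δ(M,B) = (1/2)δ(A,B) equals A # B. -/

import Mathlib

/-!
The heart of the matter is the exponential metric increasing property
`‖log A - log B‖₂ ≤ δ(A, B)`. In eigenbases `(uᵢ)` of `P` and `(vⱼ)` of `Q` the traces of
`f(P) g(Q)` are sums with the nonnegative weights `|⟨uᵢ, vⱼ⟩|²`, so the scalar inequality
`u² ≤ eᵘ + e⁻ᵘ - 2` gives `‖log P - log Q‖₂² ≤ Tr P⁻¹Q + Tr PQ⁻¹ - 2m`. For two points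
`P = A #ₛ B`, `Q = A #ₜ B` of the geodesic the right-hand side is
`∑ᵢ (2 sinh ((t - s) log λᵢ / 2))²`, where the `λᵢ` are the eigenvalues of `A⁻¹B`. Cutting the
geodesic into ever smaller steps and applying the triangle inequality yields
`‖log A - log B‖₂ ≤ (∑ᵢ log² λᵢ)^{1/2} = δ(A, B)`.

A congruence moves the pair `(A, B)` to `(1, X)` and a midpoint `M` to `N`. There
`‖log N‖₂ = ½ ‖log X‖₂`, and the property above gives `‖log X - log N‖₂ ≤ ½ ‖log X‖₂`. By strict
convexity of the Hilbert–Schmidt norm `log N = ½ log X`, that is, `N = X^{1/2}`.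
-/

open Matrix
open scoped ComplexOrder

noncomputable def matFun {m : ℕ} (f : ℝ → ℝ) (A : Matrix (Fin m) (Fin m) ℂ) :
    Matrix (Fin m) (Fin m) ℂ :=
  if hA : A.IsHermitian then
    (hA.eigenvectorUnitary : Matrix (Fin m) (Fin m) ℂ) *
      Matrix.diagonal (fun i => (f (hA.eigenvalues i) : ℂ)) *
      (star (hA.eigenvectorUnitary : Matrix (Fin m) (Fin m) ℂ))
  else 0

/-- The unique positive definite square root of a positive definite matrix
(realized via the spectral decomposition). -/
noncomputable def msqrt {m : ℕ} (A : Matrix (Fin m) (Fin m) ℂ) : Matrix (Fin m) (Fin m) ℂ :=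
  matFun Real.sqrt A

/-- The logarithm of a positive definite matrix: the unique Hermitian `L` with `exp L = A`. -/
noncomputable def mlog {m : ℕ} (A : Matrix (Fin m) (Fin m) ℂ) : Matrix (Fin m) (Fin m) ℂ :=
  matFun Real.log A

/-- The real power `A ^ t` of a positive definite matrix, via the spectral decomposition. -/
noncomputable def mpow {m : ℕ} (A : Matrix (Fin m) (Fin m) ℂ) (t : ℝ) : Matrix (Fin m) (Fin m) ℂ :=
  matFun (fun x => x ^ t) A

/-- The matrix geometric mean `A # B`. -/
noncomputable def gmean {m : ℕ} (A B : Matrix (Fin m) (Fin m) ℂ) : Matrix (Fin m) (Fin m) ℂ :=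
  msqrt A * msqrt ((msqrt A)⁻¹ * B * (msqrt A)⁻¹) * msqrt A

/-- The weighted geometric mean `A #_t B`. -/
noncomputable def wgmean {m : ℕ} (A B : Matrix (Fin m) (Fin m) ℂ) (t : ℝ) :
    Matrix (Fin m) (Fin m) ℂ :=
  msqrt A * mpow ((msqrt A)⁻¹ * B * (msqrt A)⁻¹) t * msqrt A

/-- The Frobenius (Hilbert–Schmidt) norm `‖X‖₂ = (Tr(X*X))^{1/2}`. -/
noncomputable def fnorm {m : ℕ} (X : Matrix (Fin m) (Fin m) ℂ) : ℝ :=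
  Real.sqrt ((Xᴴ * X).trace.re)

/-- The Riemannian metric `δ(A,B) = ‖log(A^{-1/2} B A^{-1/2})‖₂`. -/
noncomputable def rdist {m : ℕ} (A B : Matrix (Fin m) (Fin m) ℂ) : ℝ :=
  fnorm (mlog ((msqrt A)⁻¹ * B * (msqrt A)⁻¹))

/-- The Loewner order: `A ≤ B` iff `B - A` is positive semidefinite. -/
def Loewner {m : ℕ} (A B : Matrix (Fin m) (Fin m) ℂ) : Prop :=
  (B - A).PosSemidef

section Analysis

open Filter Topology

lemma exp_add_exp_neg_sub_two (u : ℝ) :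
    Real.exp u + Real.exp (-u) - 2 = (2 * Real.sinh (u / 2)) ^ 2 := by
  have h := Real.cosh_two_mul (u / 2)
  rw [mul_div_cancel₀ u two_ne_zero, Real.cosh_sq', Real.cosh_eq] at h
  linear_combination 2 * h

lemma sq_le_exp_add_exp_neg_sub_two (u : ℝ) : u ^ 2 ≤ Real.exp u + Real.exp (-u) - 2 := by
  rw [exp_add_exp_neg_sub_two, sq_le_sq, abs_mul, abs_two, Real.abs_sinh]
  have h : |u / 2| ≤ Real.sinh |u / 2| := Real.self_le_sinh_iff.mpr (abs_nonneg _)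
  rw [abs_div, abs_two] at h ⊢
  linarith

lemma tendsto_inv_mul_two_sinh (a : ℝ) :
    Tendsto (fun t ↦ t⁻¹ * (2 * Real.sinh (t * a / 2))) (𝓝[>] 0) (𝓝 a) := by
  have h : HasDerivAt (fun t ↦ 2 * Real.sinh (t * a / 2)) a 0 := by
    have h' := (((hasDerivAt_id (0 : ℝ)).mul_const a).div_const 2).sinh.const_mul 2
    simpa [mul_div_cancel₀] using h'
  simpa using h.tendsto_slope_zero_right

lemma dist_le_of_tendsto_inv_mul {α : Type*} [PseudoMetricSpace α] {γ : ℝ → α} {φ : ℝ → ℝ} {c : ℝ}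
    (hγ : ∀ s t, dist (γ s) (γ t) ≤ φ (t - s))
    (hφ : Tendsto (fun t ↦ t⁻¹ * φ t) (𝓝[>] 0) (𝓝 c)) : dist (γ 0) (γ 1) ≤ c := by
  have hlim : Tendsto (fun n : ℕ ↦ (n : ℝ) * φ (n : ℝ)⁻¹) atTop (𝓝 c) := by
    simpa [Function.comp_def] using
      hφ.comp (tendsto_inv_atTop_nhdsGT_zero.comp tendsto_natCast_atTop_atTop)
  refine ge_of_tendsto hlim ((eventually_ne_atTop 0).mono fun n hn ↦ ?_)
  calc dist (γ 0) (γ 1)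
    _ = dist (γ ((0 : ℕ) / n)) (γ ((n : ℕ) / n)) := by simp [hn]
    _ ≤ ∑ k ∈ Finset.range n, dist (γ (k / n)) (γ ((k + 1 : ℕ) / n)) :=
      dist_le_range_sum_dist (fun k : ℕ ↦ γ (k / n)) n
    _ ≤ ∑ _k ∈ Finset.range n, φ (n : ℝ)⁻¹ := by
      refine Finset.sum_le_sum fun k _ ↦ (hγ _ _).trans_eq (congrArg φ ?_)
      push_cast
      ring
    _ = n * φ (n : ℝ)⁻¹ := by simp

end Analysis

section FunctionalCalculus

variable {m : ℕ} {A : Matrix (Fin m) (Fin m) ℂ}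

lemma matFun_eq_cfc (f : ℝ → ℝ) (A : Matrix (Fin m) (Fin m) ℂ) : matFun f A = cfc f A := by
  by_cases hA : A.IsHermitian
  · rw [matFun, dif_pos hA, hA.cfc_eq]
    rfl
  · rw [matFun, dif_neg hA]
    exact (cfc_apply_of_not_predicate A hA).symm

lemma matFun_mul_matFun (f g : ℝ → ℝ) (A : Matrix (Fin m) (Fin m) ℂ) :
    matFun f A * matFun g A = matFun (fun x ↦ f x * g x) A := by
  simp only [matFun_eq_cfc]
  exact (cfc_mul f g A (A.finite_real_spectrum.continuousOn f)
    (A.finite_real_spectrum.continuousOn g)).symm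

lemma matFun_add_matFun (f g : ℝ → ℝ) (A : Matrix (Fin m) (Fin m) ℂ) :
    matFun f A + matFun g A = matFun (fun x ↦ f x + g x) A := by
  simp only [matFun_eq_cfc]
  exact (cfc_add A f g (A.finite_real_spectrum.continuousOn f)
    (A.finite_real_spectrum.continuousOn g)).symm

lemma matFun_matFun (hA : A.IsHermitian) (f g : ℝ → ℝ) :
    matFun f (matFun g A) = matFun (fun x ↦ f (g x)) A := by
  simp only [matFun_eq_cfc]
  exact (cfc_comp' f g A ((A.finite_real_spectrum.image g).continuousOn f)
    (A.finite_real_spectrum.continuousOn g) hA).symm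

lemma matFun_id (hA : A.IsHermitian) : matFun (fun x ↦ x) A = A := by
  rw [matFun_eq_cfc]
  exact cfc_id' ℝ A hA

lemma matFun_one (hA : A.IsHermitian) : matFun (fun _ ↦ 1) A = 1 := by
  rw [matFun_eq_cfc]
  exact cfc_const_one ℝ A hA

lemma isHermitian_matFun (f : ℝ → ℝ) (A : Matrix (Fin m) (Fin m) ℂ) :
    (matFun f A).IsHermitian := by
  rw [matFun_eq_cfc]
  exact cfc_predicate f A

lemma matFun_congr (hA : A.PosDef) {f g : ℝ → ℝ} (h : ∀ x, 0 < x → f x = g x) :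
    matFun f A = matFun g A := by
  simp_rw [matFun, dif_pos hA.isHermitian, h _ (hA.eigenvalues_pos _)]

lemma posDef_matFun (hA : A.PosDef) {f : ℝ → ℝ} (h : ∀ x, 0 < x → 0 < f x) :
    (matFun f A).PosDef := by
  rw [matFun, dif_pos hA.isHermitian]
  refine (IsUnit.posDef_star_right_conjugate_iff Unitary.isUnit_coe).mpr
    (posDef_diagonal_iff.mpr fun i ↦ ?_)
  exact_mod_cast h _ (hA.eigenvalues_pos i)

lemma trace_matFun (hA : A.IsHermitian) (f : ℝ → ℝ) :
    (matFun f A).trace = ∑ i, (f (hA.eigenvalues i) : ℂ) := by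
  rw [matFun, dif_pos hA, trace_mul_comm, ← Matrix.mul_assoc, Unitary.coe_star_mul_self,
    Matrix.one_mul, trace_diagonal]

lemma inv_matFun (hA : A.PosDef) {f : ℝ → ℝ} (h : ∀ x, 0 < x → f x ≠ 0) :
    (matFun f A)⁻¹ = matFun (fun x ↦ (f x)⁻¹) A := by
  refine inv_eq_right_inv ?_
  rw [matFun_mul_matFun, matFun_congr hA fun x hx ↦ mul_inv_cancel₀ (h x hx),
    matFun_one hA.isHermitian]

lemma posDef_msqrt (hA : A.PosDef) : (msqrt A).PosDef :=
  posDef_matFun hA fun _ ↦ Real.sqrt_pos.mpr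

lemma msqrt_mul_msqrt (hA : A.PosDef) : msqrt A * msqrt A = A := by
  rw [msqrt, matFun_mul_matFun, matFun_congr hA fun x hx ↦ Real.mul_self_sqrt hx.le,
    matFun_id hA.isHermitian]

lemma mlog_injOn : Set.InjOn mlog {A : Matrix (Fin m) (Fin m) ℂ | A.PosDef} := by
  refine Set.LeftInvOn.injOn (f₁' := matFun Real.exp) fun A (hA : A.PosDef) ↦ ?_
  rw [mlog, matFun_matFun hA.isHermitian, matFun_congr hA fun x ↦ Real.exp_log,
    matFun_id hA.isHermitian]

lemma mlog_msqrt_add_self (hA : A.PosDef) : mlog (msqrt A) + mlog (msqrt A) = mlog A := by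
  rw [mlog, msqrt, matFun_matFun hA.isHermitian, matFun_congr hA fun x hx ↦ Real.log_sqrt hx.le,
    matFun_add_matFun]
  simp only [add_halves, mlog]

lemma fnorm_sq (X : Matrix (Fin m) (Fin m) ℂ) : fnorm X ^ 2 = (Xᴴ * X).trace.re :=
  Real.sq_sqrt (Complex.nonneg_iff.mp (posSemidef_conjTranspose_mul_self X).trace_nonneg).1

lemma fnorm_matFun (hA : A.IsHermitian) (f : ℝ → ℝ) :
    fnorm (matFun f A) = √(∑ i, f (hA.eigenvalues i) ^ 2) := by
  rw [fnorm, (isHermitian_matFun f A).eq, matFun_mul_matFun, trace_matFun hA]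
  simp [sq]

end FunctionalCalculus

section Klein

variable {m : ℕ} {P Q : Matrix (Fin m) (Fin m) ℂ}

/-- The transition weight `|⟨uᵢ, vⱼ⟩|²` between the eigenbases `(uᵢ)` of `P` and `(vⱼ)` of `Q`,
encoded as the squared modulus of an entry of `Uᴴ V` for the eigenvector unitaries `U`, `V`. -/
noncomputable def overlap (hP : P.IsHermitian) (hQ : Q.IsHermitian) (i j : Fin m) : ℝ :=
  Complex.normSq
    ((star (hP.eigenvectorUnitary : Matrix (Fin m) (Fin m) ℂ) * hQ.eigenvectorUnitary) i j)

lemma overlap_nonneg (hP : P.IsHermitian) (hQ : Q.IsHermitian) (i j : Fin m) :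
    0 ≤ overlap hP hQ i j :=
  Complex.normSq_nonneg _

lemma re_trace_diagonal_mul_mul_diagonal_mul_conjTranspose {ι κ : Type*} [Fintype ι] [Fintype κ]
    [DecidableEq ι] [DecidableEq κ] (W : Matrix ι κ ℂ) (x : ι → ℝ) (y : κ → ℝ) :
    (diagonal (fun i ↦ (x i : ℂ)) * W * diagonal (fun j ↦ (y j : ℂ)) * Wᴴ).trace.re =
      ∑ i, ∑ j, Complex.normSq (W i j) * (x i * y j) := by
  simp only [trace, diag_apply, mul_apply (N := Wᴴ), mul_diagonal, diagonal_mul,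
    conjTranspose_apply, Complex.re_sum]
  refine Finset.sum_congr rfl fun i _ ↦ Finset.sum_congr rfl fun j _ ↦ ?_
  have hW : (x i : ℂ) * W i j * y j * star (W i j) =
      ((Complex.normSq (W i j) * (x i * y j) : ℝ) : ℂ) := by
    push_cast [Complex.normSq_eq_conj_mul_self, Complex.star_def]
    ring
  rw [hW, Complex.ofReal_re]

lemma re_trace_matFun_mul_matFun (hP : P.IsHermitian) (hQ : Q.IsHermitian) (f g : ℝ → ℝ) :
    (matFun f P * matFun g Q).trace.re =
      ∑ i, ∑ j, overlap hP hQ i j * (f (hP.eigenvalues i) * g (hQ.eigenvalues j)) := by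
  simp only [overlap, ← re_trace_diagonal_mul_mul_diagonal_mul_conjTranspose, matFun, dif_pos hP,
    dif_pos hQ]
  rw [star_eq_conjTranspose, star_eq_conjTranspose, conjTranspose_mul, conjTranspose_conjTranspose]
  simp only [Matrix.mul_assoc]
  rw [trace_mul_comm (hP.eigenvectorUnitary : Matrix (Fin m) (Fin m) ℂ)]
  simp only [Matrix.mul_assoc]

lemma sum_overlap (hP : P.IsHermitian) (hQ : Q.IsHermitian) :
    ∑ i, ∑ j, overlap hP hQ i j = m := by
  have h := re_trace_matFun_mul_matFun hP hQ (fun _ ↦ 1) (fun _ ↦ 1)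
  rw [matFun_one hP, matFun_one hQ] at h
  simpa using h.symm

lemma fnorm_matFun_sub_matFun_sq (hP : P.IsHermitian) (hQ : Q.IsHermitian) (f g : ℝ → ℝ) :
    fnorm (matFun f P - matFun g Q) ^ 2 =
      ∑ i, ∑ j, overlap hP hQ i j * (f (hP.eigenvalues i) - g (hQ.eigenvalues j)) ^ 2 := by
  have hff : (matFun f P * matFun f P).trace.re =
      ∑ i, ∑ j, overlap hP hQ i j * (f (hP.eigenvalues i) * f (hP.eigenvalues i)) := by
    rw [matFun_mul_matFun, ← Matrix.mul_one (matFun _ P), ← matFun_one hQ,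
      re_trace_matFun_mul_matFun hP hQ]
    simp only [mul_one]
  have hgg : (matFun g Q * matFun g Q).trace.re =
      ∑ i, ∑ j, overlap hP hQ i j * (g (hQ.eigenvalues j) * g (hQ.eigenvalues j)) := by
    rw [matFun_mul_matFun, ← Matrix.one_mul (matFun _ Q), ← matFun_one hP,
      re_trace_matFun_mul_matFun hP hQ]
    simp only [one_mul]
  rw [fnorm_sq, ((isHermitian_matFun f P).sub (isHermitian_matFun g Q)).eq, Matrix.sub_mul,
    Matrix.mul_sub, Matrix.mul_sub, trace_sub, trace_sub, trace_sub,
    trace_mul_comm (matFun g Q) (matFun f P), Complex.sub_re, Complex.sub_re, Complex.sub_re,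
    hff, hgg, re_trace_matFun_mul_matFun hP hQ]
  simp only [← Finset.sum_sub_distrib]
  exact Finset.sum_congr rfl fun i _ ↦ Finset.sum_congr rfl fun j _ ↦ by ring

lemma fnorm_mlog_sub_mlog_sq_le (hP : P.PosDef) (hQ : Q.PosDef) :
    fnorm (mlog P - mlog Q) ^ 2 ≤ (P⁻¹ * Q).trace.re + (P * Q⁻¹).trace.re - 2 * m := by
  have hP' := hP.isHermitian
  have hQ' := hQ.isHermitian
  have hPQ : (P⁻¹ * Q).trace.re =
      ∑ i, ∑ j, overlap hP' hQ' i j * ((hP'.eigenvalues i)⁻¹ * hQ'.eigenvalues j) := by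
    rw [← re_trace_matFun_mul_matFun hP' hQ' (fun x ↦ x⁻¹) (fun x ↦ x), matFun_id hQ',
      ← inv_matFun hP fun x hx ↦ hx.ne', matFun_id hP']
  have hQP : (P * Q⁻¹).trace.re =
      ∑ i, ∑ j, overlap hP' hQ' i j * (hP'.eigenvalues i * (hQ'.eigenvalues j)⁻¹) := by
    rw [← re_trace_matFun_mul_matFun hP' hQ' (fun x ↦ x) (fun x ↦ x⁻¹), matFun_id hP',
      ← inv_matFun hQ fun x hx ↦ hx.ne', matFun_id hQ']
  rw [mlog, mlog, fnorm_matFun_sub_matFun_sq hP' hQ', hPQ, hQP, ← sum_overlap hP' hQ']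
  simp only [Finset.mul_sum, ← Finset.sum_sub_distrib, ← Finset.sum_add_distrib]
  refine Finset.sum_le_sum fun i _ ↦ Finset.sum_le_sum fun j _ ↦ ?_
  have h := sq_le_exp_add_exp_neg_sub_two
    (Real.log (hP'.eigenvalues i) - Real.log (hQ'.eigenvalues j))
  rw [neg_sub, Real.exp_sub, Real.exp_sub, Real.exp_log (hP.eigenvalues_pos i),
    Real.exp_log (hQ.eigenvalues_pos j)] at h
  linear_combination mul_le_mul_of_nonneg_left h (overlap_nonneg hP' hQ' i j)

end Klein

section Conjugation

variable {n R : Type*} [Fintype n] [DecidableEq n] [CommRing R] {S : Matrix n n R}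

lemma inv_conj_mul_conj (hS : IsUnit S.det) (X Y : Matrix n n R) :
    (S * X * S)⁻¹ * (S * Y * S) = S⁻¹ * (X⁻¹ * Y) * S := by
  simp only [Matrix.mul_inv_rev, Matrix.mul_assoc, nonsing_inv_mul_cancel_left _ _ hS]

lemma charpoly_inv_conj_mul_conj (hS : IsUnit S.det) (X Y : Matrix n n R) :
    ((S * X * S)⁻¹ * (S * Y * S)).charpoly = (X⁻¹ * Y).charpoly := by
  rw [inv_conj_mul_conj hS, charpoly_mul_comm, mul_nonsing_inv_cancel_left _ _ hS]

lemma trace_inv_conj_mul_conj (hS : IsUnit S.det) (X Y : Matrix n n R) :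
    ((S * X * S)⁻¹ * (S * Y * S)).trace = (X⁻¹ * Y).trace := by
  rw [inv_conj_mul_conj hS, trace_mul_comm, mul_nonsing_inv_cancel_left _ _ hS]

end Conjugation

section Congruence

variable {m : ℕ} {A B C D S X : Matrix (Fin m) (Fin m) ℂ}

/-- The congruence `A^{-1/2} B A^{-1/2}`, which moves the pair `(A, B)` to `(1, whiten A B)`. -/
noncomputable def whiten (A B : Matrix (Fin m) (Fin m) ℂ) : Matrix (Fin m) (Fin m) ℂ :=
  (msqrt A)⁻¹ * B * (msqrt A)⁻¹

lemma isUnit_det_msqrt (hA : A.PosDef) : IsUnit (msqrt A).det :=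
  (posDef_msqrt hA).det_pos.ne'.isUnit

lemma posDef_conj (hS : S.PosDef) (hX : X.PosDef) : (S * X * S).PosDef := by
  rwa [← IsUnit.posDef_star_right_conjugate_iff hS.isUnit, star_eq_conjTranspose,
    hS.isHermitian.eq] at hX

lemma posDef_whiten (hA : A.PosDef) (hB : B.PosDef) : (whiten A B).PosDef :=
  posDef_conj (posDef_msqrt hA).inv hB

lemma msqrt_mul_whiten_mul_msqrt (hA : A.PosDef) (B : Matrix (Fin m) (Fin m) ℂ) :
    msqrt A * whiten A B * msqrt A = B := by
  have hS := isUnit_det_msqrt hA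
  rw [whiten, Matrix.mul_assoc, nonsing_inv_mul_cancel_right _ _ hS,
    mul_nonsing_inv_cancel_left _ _ hS]

lemma whiten_conj_msqrt (hA : A.PosDef) (X : Matrix (Fin m) (Fin m) ℂ) :
    whiten A (msqrt A * X * msqrt A) = X := by
  have hS := isUnit_det_msqrt hA
  rw [whiten, Matrix.mul_assoc, mul_nonsing_inv_cancel_right _ _ hS,
    nonsing_inv_mul_cancel_left _ _ hS]

lemma charpoly_whiten (hA : A.PosDef) (B : Matrix (Fin m) (Fin m) ℂ) :
    (whiten A B).charpoly = (A⁻¹ * B).charpoly := by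
  have h := charpoly_inv_conj_mul_conj (isUnit_det_msqrt hA) 1 (whiten A B)
  rw [Matrix.mul_one, msqrt_mul_msqrt hA, msqrt_mul_whiten_mul_msqrt hA] at h
  simpa using h.symm

lemma charpoly_inv_whiten_mul_whiten (hA : A.PosDef) (C D : Matrix (Fin m) (Fin m) ℂ) :
    ((whiten A C)⁻¹ * whiten A D).charpoly = (C⁻¹ * D).charpoly := by
  rw [← charpoly_inv_conj_mul_conj (isUnit_det_msqrt hA), msqrt_mul_whiten_mul_msqrt hA,
    msqrt_mul_whiten_mul_msqrt hA]

lemma rdist_eq_of_charpoly_eq (hA : A.PosDef) (hB : B.PosDef) (hC : C.PosDef) (hD : D.PosDef)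
    (h : (A⁻¹ * B).charpoly = (C⁻¹ * D).charpoly) : rdist A B = rdist C D := by
  have hAB := (posDef_whiten hA hB).isHermitian
  have hCD := (posDef_whiten hC hD).isHermitian
  rw [← charpoly_whiten hA, ← charpoly_whiten hC,
    ← IsHermitian.eigenvalues_eq_eigenvalues_iff hAB hCD] at h
  change fnorm (matFun Real.log (whiten A B)) = fnorm (matFun Real.log (whiten C D))
  rw [fnorm_matFun hAB, fnorm_matFun hCD, h]

lemma rdist_whiten_whiten (hA : A.PosDef) (hC : C.PosDef) (hD : D.PosDef) :
    rdist (whiten A C) (whiten A D) = rdist C D :=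
  rdist_eq_of_charpoly_eq (posDef_whiten hA hC) (posDef_whiten hA hD) hC hD
    (charpoly_inv_whiten_mul_whiten hA C D)

end Congruence

section Geodesic

variable {m : ℕ} {A B : Matrix (Fin m) (Fin m) ℂ}

lemma posDef_mpow (hA : A.PosDef) (t : ℝ) : (mpow A t).PosDef :=
  posDef_matFun hA fun _ hx ↦ Real.rpow_pos_of_pos hx t

lemma inv_mpow_mul_mpow (hA : A.PosDef) (s t : ℝ) :
    (mpow A s)⁻¹ * mpow A t = mpow A (t - s) := by
  rw [mpow, mpow, inv_matFun hA fun x hx ↦ (Real.rpow_pos_of_pos hx s).ne', matFun_mul_matFun,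
    mpow]
  refine matFun_congr hA fun x hx ↦ ?_
  rw [Real.rpow_sub hx, inv_mul_eq_div]

lemma wgmean_zero (hA : A.PosDef) (hB : B.PosDef) : wgmean A B 0 = A := by
  have h : mpow (whiten A B) 0 = 1 := by
    simp only [mpow, Real.rpow_zero, matFun_one (posDef_whiten hA hB).isHermitian]
  change msqrt A * mpow (whiten A B) 0 * msqrt A = A
  rw [h, Matrix.mul_one, msqrt_mul_msqrt hA]

lemma wgmean_one (hA : A.PosDef) (hB : B.PosDef) : wgmean A B 1 = B := by
  have h : mpow (whiten A B) 1 = whiten A B := by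
    simp only [mpow, Real.rpow_one, matFun_id (posDef_whiten hA hB).isHermitian]
  change msqrt A * mpow (whiten A B) 1 * msqrt A = B
  rw [h, msqrt_mul_whiten_mul_msqrt hA]

lemma posDef_wgmean (hA : A.PosDef) (hB : B.PosDef) (t : ℝ) : (wgmean A B t).PosDef :=
  posDef_conj (posDef_msqrt hA) (posDef_mpow (posDef_whiten hA hB) t)

lemma re_trace_inv_wgmean_mul_wgmean (hA : A.PosDef) (hB : B.PosDef) (s t : ℝ) :
    ((wgmean A B s)⁻¹ * wgmean A B t).trace.re =
      ∑ i, (posDef_whiten hA hB).isHermitian.eigenvalues i ^ (t - s) := by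
  have hX := posDef_whiten hA hB
  calc ((wgmean A B s)⁻¹ * wgmean A B t).trace.re
    _ = ((mpow (whiten A B) s)⁻¹ * mpow (whiten A B) t).trace.re :=
      congrArg Complex.re (trace_inv_conj_mul_conj (isUnit_det_msqrt hA) _ _)
    _ = ∑ i, hX.isHermitian.eigenvalues i ^ (t - s) := by
      rw [inv_mpow_mul_mpow hX, mpow, trace_matFun hX.isHermitian]
      norm_cast

lemma fnorm_mlog_wgmean_sub_mlog_wgmean_le (hA : A.PosDef) (hB : B.PosDef) (s t : ℝ) :
    fnorm (mlog (wgmean A B s) - mlog (wgmean A B t)) ≤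
      √(∑ i, (2 * Real.sinh ((t - s) *
        Real.log ((posDef_whiten hA hB).isHermitian.eigenvalues i) / 2)) ^ 2) := by
  have hX := posDef_whiten hA hB
  refine Real.le_sqrt_of_sq_le ((fnorm_mlog_sub_mlog_sq_le (posDef_wgmean hA hB s)
    (posDef_wgmean hA hB t)).trans_eq ?_)
  have hcard : (2 * m : ℝ) = ∑ _i : Fin m, 2 := by simp [mul_comm]
  rw [trace_mul_comm (wgmean A B s), re_trace_inv_wgmean_mul_wgmean hA hB,
    re_trace_inv_wgmean_mul_wgmean hA hB, hcard, ← Finset.sum_add_distrib,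
    ← Finset.sum_sub_distrib]
  refine Finset.sum_congr rfl fun i _ ↦ ?_
  rw [← exp_add_exp_neg_sub_two, Real.rpow_def_of_pos (hX.eigenvalues_pos i),
    Real.rpow_def_of_pos (hX.eigenvalues_pos i)]
  ring_nf

end Geodesic

section HilbertSchmidt

open Filter Topology

variable {m : ℕ} {A B M : Matrix (Fin m) (Fin m) ℂ}

/-- The Hilbert–Schmidt norm, from Mathlib's inner product `⟪X, Y⟫ = Tr (Y M Xᴴ)` at `M = 1`. -/
noncomputable local instance : NormedAddCommGroup (Matrix (Fin m) (Fin m) ℂ) :=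
  toMatrixNormedAddCommGroup 1 .one

/-- The Hilbert–Schmidt inner product `⟪X, Y⟫ = Tr (Y Xᴴ)`. -/
noncomputable local instance : InnerProductSpace ℂ (Matrix (Fin m) (Fin m) ℂ) :=
  toMatrixInnerProductSpace 1 .one

/-- The real inner product `Re Tr (Y Xᴴ)`, which makes the matrices strictly convex over `ℝ`. -/
noncomputable local instance : InnerProductSpace ℝ (Matrix (Fin m) (Fin m) ℂ) :=
  .rclikeToReal ℂ _

lemma norm_eq_fnorm (X : Matrix (Fin m) (Fin m) ℂ) : ‖X‖ = fnorm X := by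
  rw [fnorm, norm_eq_sqrt_re_inner (𝕜 := ℂ)]
  change √ (X * 1 * Xᴴ).trace.re = _
  rw [Matrix.mul_one, trace_mul_comm]

lemma dist_eq_fnorm_sub (X Y : Matrix (Fin m) (Fin m) ℂ) : dist X Y = fnorm (X - Y) := by
  rw [dist_eq_norm, norm_eq_fnorm]

theorem dist_mlog_le_rdist (hA : A.PosDef) (hB : B.PosDef) :
    dist (mlog A) (mlog B) ≤ rdist A B := by
  have hX := (posDef_whiten hA hB).isHermitian
  have hstep (s t : ℝ) : dist (mlog (wgmean A B s)) (mlog (wgmean A B t)) ≤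
      √(∑ i, (2 * Real.sinh ((t - s) * Real.log (hX.eigenvalues i) / 2)) ^ 2) :=
    (dist_eq_fnorm_sub _ _).trans_le (fnorm_mlog_wgmean_sub_mlog_wgmean_le hA hB s t)
  have hspeed : Tendsto (fun t ↦ t⁻¹ *
      √(∑ i, (2 * Real.sinh (t * Real.log (hX.eigenvalues i) / 2)) ^ 2)) (𝓝[>] 0)
      (𝓝 (rdist A B)) := by
    change Tendsto _ _ (𝓝 (fnorm (matFun Real.log (whiten A B))))
    rw [fnorm_matFun hX]
    refine (tendsto_finsetSum _ fun i _ ↦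
      (tendsto_inv_mul_two_sinh (Real.log (hX.eigenvalues i))).pow 2).sqrt.congr' ?_
    filter_upwards [self_mem_nhdsWithin] with t (ht : 0 < t)
    simp_rw [mul_pow t⁻¹, ← Finset.mul_sum]
    rw [Real.sqrt_mul (sq_nonneg _), Real.sqrt_sq (inv_nonneg.mpr ht.le)]
  have h := dist_le_of_tendsto_inv_mul hstep hspeed
  rwa [wgmean_zero hA hB, wgmean_one hA hB] at h

lemma dist_zero_mlog_whiten (A B : Matrix (Fin m) (Fin m) ℂ) :
    dist 0 (mlog (whiten A B)) = rdist A B := by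
  rw [dist_zero_left, norm_eq_fnorm]
  rfl

lemma mlog_msqrt_eq_midpoint (hA : A.PosDef) : mlog (msqrt A) = midpoint ℝ 0 (mlog A) := by
  rw [← mlog_msqrt_add_self hA, midpoint_eq_smul_add, zero_add, ← two_smul ℝ, invOf_smul_smul]

lemma whiten_gmean (hA : A.PosDef) (B : Matrix (Fin m) (Fin m) ℂ) :
    whiten A (gmean A B) = msqrt (whiten A B) :=
  whiten_conj_msqrt hA _

lemma posDef_gmean (hA : A.PosDef) (hB : B.PosDef) : (gmean A B).PosDef :=
  posDef_conj (posDef_msqrt hA) (posDef_msqrt (posDef_whiten hA hB))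

lemma rdist_gmean_right (hA : A.PosDef) (hB : B.PosDef) :
    rdist A (gmean A B) = 1 / 2 * rdist A B := by
  rw [← dist_zero_mlog_whiten A (gmean A B), whiten_gmean hA,
    mlog_msqrt_eq_midpoint (posDef_whiten hA hB), dist_left_midpoint, dist_zero_mlog_whiten]
  norm_num

lemma rdist_gmean_left (hA : A.PosDef) (hB : B.PosDef) :
    rdist (gmean A B) B = 1 / 2 * rdist A B := by
  have hX := posDef_whiten hA hB
  have hG := posDef_gmean hA hB
  rw [← rdist_gmean_right hA hB]
  refine rdist_eq_of_charpoly_eq hG hB hA hG ?_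
  rw [← charpoly_inv_whiten_mul_whiten hA, ← charpoly_whiten hA, whiten_gmean hA]
  nth_rw 2 [← msqrt_mul_msqrt hX]
  rw [nonsing_inv_mul_cancel_left _ _ (isUnit_det_msqrt hX)]

theorem eq_gmean_of_rdist_le_half (hA : A.PosDef) (hB : B.PosDef) (hM : M.PosDef)
    (hAM : rdist A M ≤ 1 / 2 * rdist A B) (hMB : rdist M B ≤ 1 / 2 * rdist A B) :
    M = gmean A B := by
  have hN := posDef_whiten hA hM
  have hX := posDef_whiten hA hB
  have hMX : dist (mlog (whiten A M)) (mlog (whiten A B)) ≤ 1 / 2 * rdist A B :=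
    ((dist_mlog_le_rdist hN hX).trans_eq (rdist_whiten_whiten hA hM hB)).trans hMB
  rw [← dist_zero_mlog_whiten, ← dist_zero_mlog_whiten A B] at hAM
  rw [← dist_zero_mlog_whiten A B] at hMX
  have htri := dist_triangle 0 (mlog (whiten A M)) (mlog (whiten A B))
  have hmid : mlog (whiten A M) = mlog (msqrt (whiten A B)) := by
    rw [mlog_msqrt_eq_midpoint hX]
    exact eq_midpoint_of_dist_eq_half (by linarith) (by linarith)
  rw [← msqrt_mul_whiten_mul_msqrt hA M, mlog_injOn hN (posDef_msqrt hX) hmid]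
  rfl

end HilbertSchmidt

/-- The geometric mean `A # B` is the unique `δ`-metric midpoint of `A` and `B`. -/
theorem gmean_unique_midpoint {m : ℕ} (A B : Matrix (Fin m) (Fin m) ℂ)
    (hA : A.PosDef) (hB : B.PosDef) :
    rdist A (gmean A B) = (1 / 2) * rdist A B ∧
    rdist (gmean A B) B = (1 / 2) * rdist A B ∧
    ∀ M : Matrix (Fin m) (Fin m) ℂ, M.PosDef →
      rdist A M = (1 / 2) * rdist A B → rdist M B = (1 / 2) * rdist A B →
      M = gmean A B := by
  exact ⟨rdist_gmean_right hA hB, rdist_gmean_left hA hB, fun M hM hAM hMB ↦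
    eq_gmean_of_rdist_le_half hA hB hM hAM.le hMB.le⟩
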